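/- Let (X, d) be a totally bounded (precompact) metric space, I a finite nonempty set, q : X × I → X a deterministic commutative transition such that q(·,i) is 1-Lipschitz for every i ∈ I, and g : X × I → [0,1] a payoff function such that g(·,i) is uniformly continuous for every i ∈ I. Then for every x₁ ∈ X there exist a real number v* and a pure strategy a ∈ I^ℕ such that limsup_{n→∞} v_n(x₁) ≤ v* and lim_{n→∞} γ_n(x₁, a) = v*; in particular the MDP starting at x₁ has uniform value v* in pure strategies and a is a pure 0-optimal strategy. -/

import Mathlib

open Filter Topology

noncomputable section

/-- The play induced by an initial state `x₁` and a pure strategy `a` in a deterministic MDP: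
`x₀ = x₁` and `x_{t+1} = q (x_t) (a t)`. -/
def play {X I : Type*} (q : X → I → X) (x₁ : X) (a : ℕ → I) : ℕ → X
  | 0 => x₁
  | t + 1 => q (play q x₁ a t) (a t)

/-- The `n`-stage average payoff `γ_n(x₁, a)`. -/
def payoff {X I : Type*} (q : X → I → X) (g : X → I → ℝ) (x₁ : X) (a : ℕ → I) (n : ℕ) : ℝ :=
  (1 / (n : ℝ)) * ∑ t ∈ Finset.range n, g (play q x₁ a t) (a t)

/-- The `n`-stage value `v_n(x₁)`. -/
def nValue {X I : Type*} (q : X → I → X) (g : X → I → ℝ) (x₁ : X) (n : ℕ) : ℝ :=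
  ⨆ a : ℕ → I, payoff q g x₁ a n

/-- The MDP starting at `x₁` has a uniform value `v` in pure strategies. -/
def HasUniformValuePure {X I : Type*} (q : X → I → X) (g : X → I → ℝ) (x₁ : X) (v : ℝ) : Prop :=
  (∀ ε > (0 : ℝ), ∃ a : ℕ → I, v - ε ≤ liminf (fun n => payoff q g x₁ a n) atTop) ∧
    limsup (fun n => nValue q g x₁ n) atTop ≤ v

/-- Total payoff over the first `n` stages. -/
def totPay {X I : Type*} (q : X → I → X) (g : X → I → ℝ) (x : X) (a : ℕ → I) (n : ℕ) : ℝ :=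
  ∑ t ∈ Finset.range n, g (play q x a t) (a t)

/-- Play `A` up to time `τ`, then `c`. -/
def catS {I : Type*} (τ : ℕ) (A c : ℕ → I) : ℕ → I := fun t => if t < τ then A t else c (t - τ)

/-- Multiset of actions used before time `t`. -/
def used {I : Type*} (a : ℕ → I) (t : ℕ) : Multiset I := (Multiset.range t).map a

section basics

variable {X I : Type*} {q : X → I → X} {g : X → I → ℝ}

lemma play_congr {x : X} {a b : ℕ → I} {n : ℕ} (h : ∀ t < n, a t = b t) :
    play q x a n = play q x b n := by
  induction n with
  | zero => rfl
  | succ n ih =>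
    simp only [play]
    rw [ih (fun t ht => h t (by omega)), h n (by omega)]

lemma totPay_congr {x : X} {a b : ℕ → I} {n : ℕ} (h : ∀ t < n, a t = b t) :
    totPay q g x a n = totPay q g x b n := by
  unfold totPay
  refine Finset.sum_congr rfl fun t ht => ?_
  have ht' := Finset.mem_range.1 ht
  rw [play_congr (fun s hs => h s (by omega)), h t ht']

lemma play_add (x : X) (a : ℕ → I) (τ s : ℕ) :
    play q x a (τ + s) = play q (play q x a τ) (fun t => a (τ + t)) s := by
  induction s with
  | zero => rfl
  | succ s ih =>
    rw [← add_assoc]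
    simp only [play]
    rw [ih]

lemma totPay_add (x : X) (a : ℕ → I) (τ s : ℕ) :
    totPay q g x a (τ + s) =
      totPay q g x a τ + totPay q g (play q x a τ) (fun t => a (τ + t)) s := by
  unfold totPay
  rw [Finset.sum_range_add]
  simp only [play_add]

lemma catS_lt {τ : ℕ} {A c : ℕ → I} {t : ℕ} (h : t < τ) : catS τ A c t = A t := by
  simp [catS, h]

lemma catS_add (τ : ℕ) (A c : ℕ → I) (t : ℕ) : catS τ A c (τ + t) = c t := by
  simp [catS]

lemma play_cat (x : X) (A c : ℕ → I) (τ s : ℕ) :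
    play q x (catS τ A c) (τ + s) = play q (play q x A τ) c s := by
  rw [play_add]
  simp only [catS_add]
  rw [play_congr (b := A) (fun t ht => catS_lt ht)]

lemma totPay_cat (x : X) (A c : ℕ → I) (τ s : ℕ) :
    totPay q g x (catS τ A c) (τ + s) = totPay q g x A τ + totPay q g (play q x A τ) c s := by
  rw [totPay_add]
  simp only [catS_add]
  rw [totPay_congr (b := A) (fun t ht => catS_lt ht), play_congr (b := A) (fun t ht => catS_lt ht)]

lemma totPay_nonneg (hg : ∀ x i, g x i ∈ Set.Icc (0 : ℝ) 1) (x : X) (a : ℕ → I) (n : ℕ) :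
    0 ≤ totPay q g x a n := Finset.sum_nonneg fun _ _ => (hg _ _).1

lemma totPay_le (hg : ∀ x i, g x i ∈ Set.Icc (0 : ℝ) 1) (x : X) (a : ℕ → I) (n : ℕ) :
    totPay q g x a n ≤ n := by
  unfold totPay
  calc _ ≤ ∑ t ∈ Finset.range n, (1:ℝ) := Finset.sum_le_sum fun _ _ => (hg _ _).2
    _ = n := by simp

lemma used_succ (a : ℕ → I) (t : ℕ) : used a (t + 1) = used a t + {a t} := by
  rw [add_comm (used a t), Multiset.singleton_add]
  simp [used, Multiset.range_succ]

lemma used_add (a : ℕ → I) (t s : ℕ) :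
    used a (t + s) = used a t + used (fun r => a (t + r)) s := by
  induction s with
  | zero => simp [used]
  | succ s ih => rw [← add_assoc, used_succ, used_succ, ih, add_assoc]

lemma used_congr {a b : ℕ → I} {n : ℕ} (h : ∀ t < n, a t = b t) : used a n = used b n := by
  unfold used
  exact Multiset.map_congr rfl fun t ht => h t (Multiset.mem_range.1 ht)

lemma used_mono (a : ℕ → I) {s t : ℕ} (h : s ≤ t) : used a s ≤ used a t := by
  obtain ⟨r, rfl⟩ := Nat.exists_eq_add_of_le h
  rw [used_add]
  exact Multiset.le_add_right _ _

lemma card_used (a : ℕ → I) (t : ℕ) : (used a t).card = t := by simp [used]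

lemma exists_used_eq [Nonempty I] (s : Multiset I) : ∃ A : ℕ → I, used A s.card = s := by
  induction s using Multiset.induction_on with
  | empty => exact ⟨fun _ => Classical.arbitrary I, rfl⟩
  | cons i s ih =>
    obtain ⟨A, hA⟩ := ih
    refine ⟨catS s.card A (fun _ => i), ?_⟩
    rw [Multiset.card_cons, used_succ, used_congr (b := A) (fun t ht => catS_lt ht), hA]
    have : catS s.card A (fun _ => i) s.card = i := by simp [catS]
    rw [this, add_comm, Multiset.singleton_add]

variable [RightCommutative q]

lemma play_eq (x : X) (a : ℕ → I) (t : ℕ) : play q x a t = (used a t).foldl q x := by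
  induction t with
  | zero => rfl
  | succ t ih =>
    rw [used_succ, Multiset.foldl_add, ← ih]
    rfl

lemma play_foldl (x : X) (M : Multiset I) (a : ℕ → I) (t : ℕ) :
    play q (M.foldl q x) a t = (M + used a t).foldl q x := by
  rw [play_eq, Multiset.foldl_add]

lemma foldl_dist [PseudoMetricSpace X] (hLip : ∀ i, LipschitzWith 1 (fun x => q x i))
    (s : Multiset I) (x y : X) : dist (s.foldl q x) (s.foldl q y) ≤ dist x y := by
  induction s using Multiset.induction_on generalizing x y with
  | empty => simp
  | cons i s ih =>
    rw [Multiset.foldl_cons, Multiset.foldl_cons]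
    refine (ih _ _).trans ?_
    simpa using (hLip i).dist_le_mul x y

end basics

lemma play_dist {X I : Type*} {q : X → I → X} [PseudoMetricSpace X]
    (hLip : ∀ i, LipschitzWith 1 (fun x => q x i))
    (a : ℕ → I) (x y : X) (t : ℕ) : dist (play q x a t) (play q y a t) ≤ dist x y := by
  induction t with
  | zero => exact le_rfl
  | succ t ih =>
    refine le_trans ?_ ih
    simpa [play] using (hLip (a t)).dist_le_mul (play q x a t) (play q y a t)

lemma modulus {X I : Type*} [PseudoMetricSpace X] [Finite I] {g : X → I → ℝ}
    (hgu : ∀ i, UniformContinuous (fun x => g x i)) {η : ℝ} (hη : 0 < η) :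
    ∃ δ > 0, ∀ i x y, dist x y < δ → g y i - η ≤ g x i := by
  have h : ∀ i, ∀ᶠ δ in 𝓝[>] (0:ℝ), ∀ x y, dist x y < δ → g y i - η ≤ g x i := by
    intro i
    obtain ⟨δ, hδ, h⟩ := Metric.uniformContinuous_iff.1 (hgu i) η hη
    filter_upwards [Ioo_mem_nhdsGT hδ] with d hd x y hxy
    have := h (lt_trans hxy hd.2)
    rw [Real.dist_eq, abs_lt] at this
    linarith [this.1]
  obtain ⟨δ, h1, h2⟩ := ((eventually_all.2 h).and self_mem_nhdsWithin).exists
  exact ⟨δ, h2, h1⟩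

/-- Uniform recurrence. -/
lemma recur {X I : Type*} [MetricSpace X] [DecidableEq I]
    (hX : TotallyBounded (Set.univ : Set X)) {q : X → I → X} [RightCommutative q]
    (hLip : ∀ i, LipschitzWith 1 (fun x => q x i)) (J : Finset I) {ε : ℝ} (hε : 0 < ε) :
    ∃ (m : Multiset I) (R : ℕ), (∀ i ∈ m, i ∈ J) ∧ ∀ s : Multiset I, (∀ i ∈ s, i ∈ J) →
      ∃ r : Multiset I, (∀ i ∈ r, i ∈ J) ∧ r.card ≤ R ∧
        ∀ y, dist ((m + s + r).foldl q y) (m.foldl q y) < ε := by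
  classical
  obtain ⟨F, -, hF, hcov⟩ := Metric.finite_approx_of_totallyBounded hX (ε / 8) (by positivity)
  have hc : ∀ x : X, ∃ c : F, dist x c < ε / 8 := by
    intro x
    have := hcov (Set.mem_univ x)
    simp only [Set.mem_iUnion] at this
    obtain ⟨c, hc, hxc⟩ := this
    exact ⟨⟨c, hc⟩, hxc⟩
  choose c hc using hc
  have : Fintype F := hF.fintype
  let code : Multiset I → (F → F) := fun s f => c (s.foldl q f)
  have hcode : ∀ s s', code s = code s' → ∀ y, dist (s.foldl q y) (s'.foldl q y) < ε / 2 := by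
    intro s s' h y
    have h1 := foldl_dist hLip s y (c y)
    have h2 := foldl_dist hLip s' (c y) y
    have h3 := hc (s.foldl q (c y))
    have h4 := hc (s'.foldl q (c y))
    have h5 : c (s.foldl q (c y)) = c (s'.foldl q (c y)) := congrFun h (c y)
    rw [h5] at h3
    have h6 := hc y
    rw [dist_comm] at h4
    rw [dist_comm (c y : X)] at h2
    have := dist_triangle4 (s.foldl q y) (s.foldl q (c y)) (c (s'.foldl q (c y))) (s'.foldl q (c y))
    have := dist_triangle (s.foldl q y) (s'.foldl q (c y)) (s'.foldl q y)
    linarith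
  have hrep : ∀ κ : F → F, ∃ s : Multiset I, (∀ i ∈ s, i ∈ J) ∧
      ((∃ s' : Multiset I, (∀ i ∈ s', i ∈ J) ∧ code s' = κ) → code s = κ) := by
    intro κ
    by_cases h : ∃ s' : Multiset I, (∀ i ∈ s', i ∈ J) ∧ code s' = κ
    · obtain ⟨s, h1, h2⟩ := h
      exact ⟨s, h1, fun _ => h2⟩
    · exact ⟨0, by simp, fun h' => absurd h' h⟩
  choose rep hrepJ hrepc using hrep
  have hper : ∀ κ : F → F, ∃ n p : ℕ, code (n • rep κ) = code ((n + (p + 1)) • rep κ) := by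
    intro κ
    obtain ⟨n, n', hne, h⟩ := Finite.exists_ne_map_eq_of_infinite (fun n : ℕ => code (n • rep κ))
    rcases lt_or_gt_of_ne hne with hlt | hlt
    · obtain ⟨p, rfl⟩ := Nat.exists_eq_add_of_lt hlt
      exact ⟨n, p, h⟩
    · obtain ⟨p, rfl⟩ := Nat.exists_eq_add_of_lt hlt
      exact ⟨n', p, h.symm⟩
  choose n p hnp using hper
  have hsm : ∀ κ k, ∀ i ∈ k • rep κ, i ∈ J := fun κ k i hi =>
    hrepJ κ i (Multiset.mem_of_mem_nsmul hi)
  refine ⟨∑ κ, n κ • rep κ, ∑ κ, (p κ • rep κ).card, ?_, ?_⟩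
  · intro i hi
    obtain ⟨κ, -, h⟩ := Multiset.mem_sum.1 hi
    exact hsm _ _ i h
  · intro s hs
    set κ := code s with hκ
    refine ⟨p κ • rep κ, hsm _ _, ?_, ?_⟩
    · exact Finset.single_le_sum (f := fun κ => (p κ • rep κ).card) (fun _ _ => Nat.zero_le _)
        (Finset.mem_univ κ)
    · intro y
      have e1 : code s = code (rep κ) := (hrepc κ ⟨s, hs, rfl⟩).symm
      rw [← Finset.add_sum_erase _ _ (Finset.mem_univ κ)]
      set m' := ∑ x ∈ Finset.univ.erase κ, n x • rep x
      have h1 := hcode _ _ e1 ((n κ • rep κ + m' + p κ • rep κ).foldl q y)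
      have h2 := hcode _ _ (hnp κ) (m'.foldl q y)
      rw [← Multiset.foldl_add, ← Multiset.foldl_add] at h1 h2
      have e2 : n κ • rep κ + m' + p κ • rep κ + rep κ = m' + (n κ + (p κ + 1)) • rep κ := by
        rw [add_nsmul, add_nsmul, one_nsmul]; abel
      have e3 : n κ • rep κ + m' + p κ • rep κ + s = n κ • rep κ + m' + s + p κ • rep κ := by abel
      rw [e2, e3] at h1
      rw [add_comm m' (n κ • rep κ)] at h2
      rw [dist_comm] at h2
      have := dist_triangle ((n κ • rep κ + m' + s + p κ • rep κ).foldl q y)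
        ((m' + (n κ + (p κ + 1)) • rep κ).foldl q y) ((n κ • rep κ + m').foldl q y)
      linarith

/-- Stages from which all averages up to `M` are good. -/
lemma good_start {f : ℕ → ℝ} (hf1 : ∀ t, f t ≤ 1) {w : ℝ} (M : ℕ)
    (h : ∀ t0, ∃ m, 1 ≤ m ∧ m ≤ M ∧ ∑ t ∈ Finset.range m, f (t0 + t) < m * w) (n : ℕ) :
    ∀ t0, ∑ t ∈ Finset.range n, f (t0 + t) ≤ n * w + M * (1 + |w|) := by
  induction n using Nat.strong_induction_on with
  | _ n ih =>
    intro t0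
    by_cases hn : n ≤ M
    · have h1 : ∑ t ∈ Finset.range n, f (t0 + t) ≤ n := by
        calc _ ≤ ∑ t ∈ Finset.range n, (1:ℝ) := Finset.sum_le_sum fun _ _ => hf1 _
          _ = n := by simp
      have h2 : (n:ℝ) ≤ M := by exact_mod_cast hn
      have h3 : (n:ℝ) * (1 + |w|) ≤ M * (1 + |w|) := by gcongr
      have h4 : (n:ℝ) * (-|w|) ≤ n * w := by gcongr; exact neg_abs_le w
      linarith
    · obtain ⟨m, h1, h2, h3⟩ := h t0
      obtain ⟨k, rfl⟩ : ∃ k, n = m + k := Nat.exists_eq_add_of_le (by omega)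
      have := ih k (by omega) (t0 + m)
      rw [Finset.sum_range_add]
      simp only [← add_assoc]
      push_cast
      linarith

lemma eps_opt {X I : Type*} [MetricSpace X] [Finite I]
    (hX : TotallyBounded (Set.univ : Set X)) {q : X → I → X} {g : X → I → ℝ}
    (hg : ∀ x i, g x i ∈ Set.Icc (0 : ℝ) 1)
    (hLip : ∀ i, LipschitzWith 1 (fun x => q x i))
    (hgu : ∀ i, UniformContinuous (fun x => g x i))
    (x : X) (v : ℝ) (hv : ∀ ε > 0, ∃ᶠ n in atTop, ∃ a : ℕ → I, n * (v - ε) ≤ totPay q g x a n)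
    {ε : ℝ} (hε : 0 < ε) :
    ∃ (b : ℕ → I) (K : ℝ), ∀ n : ℕ, n * (v - ε) - K ≤ totPay q g x b n := by
  have key : ∀ M : ℕ, ∃ (a : ℕ → I) (t0 : ℕ), ∀ m : ℕ, m ≤ M →
      m * (v - ε / 2) ≤ totPay q g (play q x a t0) (fun t => a (t0 + t)) m := by
    intro M
    by_contra hcon
    push Not at hcon
    obtain ⟨n, ⟨a, ha⟩, hn⟩ := ((hv (ε / 4) (by positivity)).and_eventually
      (eventually_gt_atTop ⌈M * (1 + |v - ε / 2|) / (ε / 4)⌉₊)).exists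
    have h := good_start (f := fun t => g (play q x a t) (a t)) (fun t => (hg _ _).2)
      (w := v - ε / 2) M (by
        intro t0
        obtain ⟨m, h1, h2⟩ := hcon a t0
        refine ⟨m, ?_, h1, ?_⟩
        · rcases Nat.eq_zero_or_pos m with rfl | h
          · simp [totPay] at h2
          · exact h
        · simpa only [totPay, ← play_add] using h2) n 0
    simp only [zero_add] at h
    have h5 : totPay q g x a n ≤ n * (v - ε / 2) + M * (1 + |v - ε / 2|) := h
    have h6 := Nat.lt_of_ceil_lt hn
    rw [div_lt_iff₀ (by positivity)] at h6
    linarith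
  choose a t0 ha using key
  obtain ⟨δ, hδ, hmod⟩ := modulus hgu (half_pos hε)
  obtain ⟨F, -, hF, hcov⟩ := Metric.finite_approx_of_totallyBounded hX (δ / 2) (by positivity)
  let U : Ultrafilter ℕ := hyperfilter ℕ
  have hU : ∀ m : ℕ, ∀ᶠ M in (U : Filter ℕ), m ≤ M := fun m => by
    have := (eventually_ge_atTop m)
    rw [← Nat.cofinite_eq_atTop] at this
    exact this.filter_mono (hyperfilter_le_cofinite)
  have h1 : ∃ z ∈ F, ∀ᶠ M in (U : Filter ℕ), dist (play q x (a M) (t0 M)) z < δ / 2 := by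
    rw [← Ultrafilter.eventually_exists_mem_iff hF]
    refine Eventually.of_forall fun M => ?_
    have := hcov (Set.mem_univ (play q x (a M) (t0 M)))
    simpa using this
  have h2 : ∀ t, ∃ i, ∀ᶠ M in (U : Filter ℕ), a M (t0 M + t) = i := by
    intro t
    rw [← Ultrafilter.eventually_exists_iff]
    exact Eventually.of_forall fun M => ⟨_, rfl⟩
  obtain ⟨z, -, hz⟩ := h1
  choose c hc using h2
  obtain ⟨M0, hM0⟩ := hz.exists
  set y := play q x (a M0) (t0 M0) with hy
  have hgood : ∀ m : ℕ, m * (v - ε) ≤ totPay q g y c m := by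
    intro m
    have h3 : ∀ᶠ M in (U : Filter ℕ), ∀ t ∈ Finset.range m, a M (t0 M + t) = c t := by
      rw [Filter.eventually_all_finset]
      exact fun t _ => hc t
    obtain ⟨M, hMz, hMc, hMm⟩ := (hz.and (h3.and (hU m))).exists
    have h4 := ha M m hMm
    rw [totPay_congr (b := c) (fun t ht => hMc t (Finset.mem_range.2 ht))] at h4
    have h5 : totPay q g (play q x (a M) (t0 M)) c m - m * (ε / 2) ≤ totPay q g y c m := by
      have : (m:ℝ) * (ε / 2) = ∑ t ∈ Finset.range m, ε / 2 := by simp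
      unfold totPay
      rw [this, ← Finset.sum_sub_distrib]
      refine Finset.sum_le_sum fun t _ => hmod _ _ _ ?_
      refine (play_dist hLip c _ _ t).trans_lt ?_
      have := dist_triangle_right y (play q x (a M) (t0 M)) z
      linarith
    linarith
  refine ⟨catS (t0 M0) (a M0) c, t0 M0 * |v - ε|, fun n => ?_⟩
  rcases le_total n (t0 M0) with h | h
  · have h1 := totPay_nonneg (q := q) hg x (catS (t0 M0) (a M0) c) n
    have h2 : (n:ℝ) * (v - ε) ≤ n * |v - ε| := by gcongr; exact le_abs_self _
    have h3 : (n:ℝ) * |v - ε| ≤ t0 M0 * |v - ε| := by gcongr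
    linarith
  · obtain ⟨s, rfl⟩ := Nat.exists_eq_add_of_le h
    rw [totPay_cat]
    have h1 := totPay_nonneg (q := q) hg x (a M0) (t0 M0)
    have h2 := hgood s
    have h3 : (t0 M0:ℝ) * (v - ε) ≤ t0 M0 * |v - ε| := by gcongr; exact le_abs_self _
    push_cast
    linarith

/-- `b` uses the actions outside `J` exactly `z` times, and actions in `J` infinitely often. -/
def Prof {I : Type*} [DecidableEq I] (J : Finset I) (z : I → ℕ) (b : ℕ → I) : Prop :=
  (∀ i ∉ J, ∀ t, (used b t).count i ≤ z i) ∧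
    ∀ n : ℕ, ∃ N, (∀ i ∈ J, n ≤ (used b N).count i) ∧ ∀ i ∉ J, z i ≤ (used b N).count i

lemma exists_prof {I : Type*} [DecidableEq I] [Fintype I] (b : ℕ → I) :
    ∃ J z, Prof J z b := by
  classical
  let bd : I → Prop := fun i => ∃ k, ∀ t, (used b t).count i ≤ k
  have h : ∀ i, ∃ k, bd i → (∀ t, (used b t).count i ≤ k) ∧ ∃ t, k ≤ (used b t).count i := by
    intro i
    by_cases hb : bd i
    · refine ⟨Nat.find hb, fun _ => ⟨Nat.find_spec hb, ?_⟩⟩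
      by_contra! hcon
      have h0 := hcon 0
      have := Nat.find_min hb (m := Nat.find hb - 1) (by omega)
      exact this fun t => by have := hcon t; omega
    · exact ⟨0, fun h => absurd h hb⟩
  choose z hz using h
  refine ⟨Finset.univ.filter (fun i => ¬ bd i), z, ?_, ?_⟩
  · intro i hi
    simp only [Finset.mem_filter, Finset.mem_univ, true_and, not_not] at hi
    exact (hz i hi).1
  · intro n
    have : ∀ i, ∃ N, (¬ bd i → n ≤ (used b N).count i) ∧ (bd i → z i ≤ (used b N).count i) := by
      intro i
      by_cases hb : bd i
      · obtain ⟨t, ht⟩ := (hz i hb).2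
        exact ⟨t, fun h => absurd hb h, fun _ => ht⟩
      · have hb' := hb
        simp only [bd] at hb'
        push Not at hb'
        obtain ⟨t, ht⟩ := hb' n
        exact ⟨t, fun _ => ht.le, fun h => absurd h hb⟩
    choose N hN using this
    have hle : ∀ i, (used b (N i)).count i ≤ (used b (∑ i, N i)).count i := fun i =>
      Multiset.count_le_of_le i (used_mono b
        (Finset.single_le_sum (fun _ _ => Nat.zero_le _) (Finset.mem_univ i)))
    refine ⟨∑ i, N i, fun i hi => ?_, fun i hi => ?_⟩
    · simp only [Finset.mem_filter, Finset.mem_univ, true_and] at hi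
      exact ((hN i).1 hi).trans (hle i)
    · simp only [Finset.mem_filter, Finset.mem_univ, true_and, not_not] at hi
      exact ((hN i).2 hi).trans (hle i)

lemma step_lemma {X I : Type*} [MetricSpace X] [Fintype I] [Nonempty I] [DecidableEq I]
    (hX : TotallyBounded (Set.univ : Set X)) {q : X → I → X} [RightCommutative q] {g : X → I → ℝ}
    (hg : ∀ x i, g x i ∈ Set.Icc (0 : ℝ) 1)
    (hLip : ∀ i, LipschitzWith 1 (fun x => q x i))
    (hgu : ∀ i, UniformContinuous (fun x => g x i))
    (x : X) {J : Finset I} {z : I → ℕ} {b : ℕ → I} (hb : Prof J z b)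
    {w K0 : ℝ} (hw : w ≤ 1) (hK0 : ∀ n : ℕ, n * w - K0 ≤ totPay q g x b n) {η : ℝ} (hη : 0 < η) :
    ∃ K : ℕ, ∀ M : Multiset I, (∀ i ∉ J, M.count i ≤ z i) → ∃ c : ℕ → I, ∀ n : ℕ,
      n * (w - η) - K ≤ totPay q g (M.foldl q x) c n ∧
      (K ≤ n → ∀ i ∉ J, (M + used c n).count i ≤ z i) := by
  obtain ⟨δ, hδ, hmod⟩ := modulus hgu hη
  obtain ⟨m, R, hmJ, hrec⟩ := recur hX hLip J hδ
  obtain ⟨N, hN1, hN2⟩ := hb.2 m.card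
  obtain ⟨K, hK⟩ := exists_nat_ge (|K0| + N + N * |w| + (R + N))
  have hmN : m ≤ used b N := by
    rw [Multiset.le_iff_count]
    intro i
    by_cases hi : i ∈ J
    · exact (Multiset.count_le_card i m).trans (hN1 i hi)
    · rw [Multiset.count_eq_zero_of_notMem (fun h => hi (hmJ i h))]
      exact Nat.zero_le _
  have hw0 : 0 ≤ (N:ℝ) * |w| := by positivity
  have hK0' := neg_abs_le K0
  have hK0'' := le_abs_self K0
  have hK00 := abs_nonneg K0
  refine ⟨K, fun M hM => ?_⟩
  set s := M.filter (· ∈ J) with hs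
  set ζ := M.filter (fun i => ¬ i ∈ J) with hζ
  have hMs : s + ζ = M := Multiset.filter_add_not _ _
  obtain ⟨r, hrJ, hrR, hr⟩ := hrec s (fun i hi => (Multiset.mem_filter.1 hi).2)
  have hζN : ζ ≤ used b N := by
    rw [Multiset.le_iff_count]
    intro i
    rw [hζ, Multiset.count_filter]
    split_ifs with hi
    · exact Nat.zero_le _
    · exact (hM i hi).trans (hN2 i hi)
  obtain ⟨e', he'⟩ := Multiset.le_iff_exists_add.1 hζN
  obtain ⟨E, hE⟩ := exists_used_eq (r + e')
  set L := (r + e').card with hL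
  have hLle : L ≤ R + N := by
    have := congrArg Multiset.card he'
    rw [card_used, Multiset.card_add] at this
    rw [hL, Multiset.card_add]
    omega
  have hLR : (L:ℝ) ≤ R + N := by exact_mod_cast hLle
  have hMe : M + (r + e') = s + r + used b N := by
    rw [he', ← hMs]; abel
  refine ⟨catS L E (fun t => b (N + t)), fun n => ?_⟩
  rcases le_total n L with h | h
  · constructor
    · have h1 := totPay_nonneg (q := q) hg (M.foldl q x) (catS L E (fun t => b (N + t))) n
      have h2 : (n:ℝ) * (w - η) ≤ n * 1 := by gcongr; linarith
      have h3 : (n:ℝ) ≤ L := by exact_mod_cast h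
      have : (0:ℝ) ≤ N := by positivity
      linarith
    · intro hKn
      have hRN : (R:ℝ) + N ≤ K := by
        have : (0:ℝ) ≤ N := by positivity
        linarith
      have hRN' : R + N ≤ K := by exact_mod_cast hRN
      have hnL : n = L := by omega
      rw [hnL, used_congr (b := E) (fun t ht => catS_lt ht), hE, hMe]
      intro i hi
      rw [Multiset.count_add, Multiset.count_add,
        Multiset.count_eq_zero_of_notMem (s := s) (fun h => hi (Multiset.mem_filter.1 h).2),
        Multiset.count_eq_zero_of_notMem (s := r) (fun h => hi (hrJ i h))]
      simpa using hb.1 i hi N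
  · obtain ⟨t, rfl⟩ := Nat.exists_eq_add_of_le h
    constructor
    · rw [totPay_cat, play_foldl, hE, hMe]
      have h1 := totPay_nonneg (q := q) hg (M.foldl q x) E L
      have h2 := hK0 (N + t)
      rw [totPay_add] at h2
      have h3 := totPay_le (q := q) hg x b N
      have h4 : totPay q g (play q x b N) (fun t => b (N + t)) t - t * η ≤
          totPay q g ((s + r + used b N).foldl q x) (fun t => b (N + t)) t := by
        have : (t:ℝ) * η = ∑ u ∈ Finset.range t, η := by simp
        unfold totPay
        rw [this, ← Finset.sum_sub_distrib]
        refine Finset.sum_le_sum fun u _ => hmod _ _ _ ?_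
        rw [play_eq x b N, play_foldl, play_foldl]
        obtain ⟨m', hm'⟩ := Multiset.le_iff_exists_add.1 hmN
        set B' := used (fun t => b (N + t)) u
        have e1 : s + r + used b N + B' = (m' + B') + (m + s + r) := by rw [hm']; abel
        have e2 : used b N + B' = (m' + B') + m := by rw [hm']; abel
        rw [e1, e2, Multiset.foldl_add, Multiset.foldl_add _ _ _ m]
        exact hr _
      have h5 : (L:ℝ) * (w - η) ≤ L * 1 := by gcongr; linarith
      have h6 : (N:ℝ) * (-|w|) ≤ N * w := by gcongr; exact neg_abs_le w
      push_cast at h2 ⊢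
      linarith
    · intro _ i hi
      rw [used_add, used_congr (b := E) (fun t ht => catS_lt ht), hE, ← add_assoc, hMe]
      simp only [catS_add]
      rw [add_assoc, ← used_add, Multiset.count_add, Multiset.count_add,
        Multiset.count_eq_zero_of_notMem (s := s) (fun h => hi (Multiset.mem_filter.1 h).2),
        Multiset.count_eq_zero_of_notMem (s := r) (fun h => hi (hrJ i h))]
      simpa using hb.1 i hi (N + t)

lemma glue {X I : Type*} [Nonempty I] {q : X → I → X} {g : X → I → ℝ}
    (hg : ∀ x i, g x i ∈ Set.Icc (0 : ℝ) 1)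
    (x : X) (v : ℝ) (P : ℕ → X → Prop) (hP0 : P 0 x) (e e' : ℕ → ℝ) (K : ℕ → ℕ)
    (hstep : ∀ k y, P k y → ∃ c : ℕ → I, ∀ n : ℕ, n * (v - e k) - K k ≤ totPay q g y c n ∧
      (K k ≤ n → P (k + 1) (play q y c n)))
    (he : ∀ k, e k ≤ e' k) (he' : ∀ k, e k < e' (k + 1)) (hanti : Antitone e') :
    ∃ (a : ℕ → I) (C : ℝ), ∀ k, ∃ T : ℕ, ∀ n : ℕ, T ≤ n → n * (v - e' k) - C ≤ totPay q g x a n := by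
  let C : ℝ := K 0
  let Q : ℕ → (ℕ → I) × ℕ → Prop := fun k s => P k (play q x s.1 s.2) ∧
    s.2 * v - totPay q g x s.1 s.2 + K k ≤ e' k * s.2 + C
  have hs : ∀ k (s : {s // Q k s}), ∃ s' : {s // Q (k + 1) s}, s.1.2 < s'.1.2 ∧
      (∀ t < s.1.2, s'.1.1 t = s.1.1 t) ∧
      ∀ n : ℕ, s.1.2 ≤ n → n * (v - e' k) - C ≤ totPay q g x s'.1.1 n := by
    rintro k ⟨⟨A, τ⟩, hp, hd⟩
    dsimp only at hp hd
    obtain ⟨c, hc⟩ := hstep k _ hp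
    have hpos : 0 < e' (k + 1) - e k := sub_pos.2 (he' k)
    obtain ⟨l, hl⟩ := exists_nat_ge ((K (k + 1) + |τ * v - totPay q g x A τ + K k| +
      |e' (k + 1) * τ| + |C|) / (e' (k + 1) - e k))
    rw [div_le_iff₀ hpos] at hl
    set l' := l + K k + 1 with hl'
    have hll : (l:ℝ) * (e' (k + 1) - e k) ≤ l' * (e' (k + 1) - e k) := by
      gcongr; omega
    refine ⟨⟨(catS τ A c, τ + l'), ?_, ?_⟩, ?_, ?_, ?_⟩
    · dsimp only
      rw [play_cat]
      exact (hc l').2 (by omega)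
    · dsimp only
      rw [totPay_cat]
      have h1 := (hc l').1
      have h2 := le_abs_self (τ * v - totPay q g x A τ + K k)
      have h3 := neg_abs_le (e' (k + 1) * τ)
      have h4 := neg_abs_le C
      push_cast at *
      linarith
    · dsimp only; omega
    · intro t ht
      exact catS_lt ht
    · intro n hn
      obtain ⟨m, rfl⟩ := Nat.exists_eq_add_of_le hn
      dsimp only
      rw [totPay_cat]
      have h1 := (hc m).1
      have h2 : (m:ℝ) * e k ≤ m * e' k := by gcongr; exact he k
      push_cast
      linarith
  choose F hF1 hF2 hF3 using hs
  let seq : ∀ k, {s // Q k s} := fun k => Nat.rec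
    ⟨(fun _ => Classical.arbitrary I, 0), by
      refine ⟨hP0, ?_⟩
      simp [totPay, C]⟩ F k
  have hsucc : ∀ k, seq (k + 1) = F k (seq k) := fun k => rfl
  let A := fun k => (seq k).1.1
  let τ := fun k => (seq k).1.2
  have hτ : StrictMono τ := strictMono_nat_of_lt_succ fun k => by
    simp only [τ, hsucc]; exact hF1 k _
  have hA : ∀ k, ∀ t < τ k, A (k + 1) t = A k t := fun k t ht => by
    simp only [A, hsucc]; exact hF2 k _ t ht
  have hA' : ∀ k j, ∀ t < τ k, A (k + j) t = A k t := by
    intro k j t ht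
    induction j with
    | zero => rfl
    | succ j ih =>
      rw [← add_assoc, hA _ _ (ht.trans_le (hτ.monotone (by omega))), ih]
  have hB : ∀ k, ∀ n : ℕ, τ k ≤ n → n * (v - e' k) - C ≤ totPay q g x (A (k + 1)) n := by
    intro k n hn
    simp only [A, hsucc]; exact hF3 k _ n hn
  have hid : ∀ k, k ≤ τ k := fun k => hτ.id_le k
  let a : ℕ → I := fun t => A (t + 1) t
  have ha : ∀ k, ∀ t < τ k, a t = A k t := by
    intro k t ht
    have h1 : t < τ (t + 1) := lt_of_lt_of_le (Nat.lt_succ_self t) (hid (t + 1))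
    rcases le_total k (t + 1) with h | h
    · obtain ⟨j, hj⟩ := Nat.exists_eq_add_of_le h
      simp only [a]
      rw [hj]
      exact hA' k j t ht
    · obtain ⟨j, hj⟩ := Nat.exists_eq_add_of_le h
      simp only [a]
      rw [hj]
      exact (hA' (t + 1) j t h1).symm
  refine ⟨a, C, fun k => ⟨τ k, fun n hn => ?_⟩⟩
  have hex : ∃ l, n < τ l := ⟨n + 1, lt_of_lt_of_le (Nat.lt_succ_self n) (hid _)⟩
  classical
  obtain ⟨l, hl⟩ : ∃ l, l = Nat.find hex := ⟨_, rfl⟩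
  have hnl : n < τ l := hl ▸ Nat.find_spec hex
  have hkl : k < l := by
    by_contra h
    have := hτ.monotone (not_lt.1 h)
    omega
  obtain ⟨p, rfl⟩ : ∃ p, l = p + 1 := ⟨l - 1, by omega⟩
  have hpn : τ p ≤ n := not_lt.1 (Nat.find_min hex (by omega))
  have h1 := hB p n hpn
  rw [totPay_congr (b := A (p + 1)) (fun t ht => ha (p + 1) t (by omega))]
  have h2 : (n:ℝ) * (v - e' k) ≤ n * (v - e' p) := by
    gcongr
    exact hanti (by omega)
  linarith

/-- In a precompact metric space with a `1`-Lipschitz deterministic commutative transition and a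
uniformly continuous payoff, the MDP starting at any state has a uniform value in pure
strategies, and there is a pure `0`-optimal strategy. -/
theorem exists_uniform_value_and_pure_zero_optimal
    {X I : Type*} [MetricSpace X] [Fintype I] [Nonempty I]
    (hX : TotallyBounded (Set.univ : Set X))
    (q : X → I → X) (g : X → I → ℝ)
    (hg : ∀ x i, g x i ∈ Set.Icc (0 : ℝ) 1)
    (hcomm : ∀ x i i', q (q x i) i' = q (q x i') i)
    (hLip : ∀ i, LipschitzWith 1 (fun x => q x i))
    (hgu : ∀ i, UniformContinuous (fun x => g x i))
    (x₁ : X) :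
    ∃ (v : ℝ) (a : ℕ → I),
      limsup (fun n => nValue q g x₁ n) atTop ≤ v ∧
      Tendsto (fun n => payoff q g x₁ a n) atTop (𝓝 v) := by
  classical
  haveI : RightCommutative q := ⟨hcomm⟩
  have hpay : ∀ a n, payoff q g x₁ a n = totPay q g x₁ a n / n := by
    intro a n
    simp only [payoff, totPay]
    ring
  have hp0 : ∀ a n, 0 ≤ payoff q g x₁ a n := fun a n => by
    rw [hpay]; exact div_nonneg (totPay_nonneg hg _ _ _) (Nat.cast_nonneg _)
  have hp1 : ∀ a n, payoff q g x₁ a n ≤ 1 := fun a n => by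
    rw [hpay]; exact div_le_one_of_le₀ (totPay_le hg _ _ _) (Nat.cast_nonneg _)
  have hbdd : ∀ n, BddAbove (Set.range fun a => payoff q g x₁ a n) := fun n =>
    ⟨1, by rintro _ ⟨a, rfl⟩; exact hp1 a n⟩
  have hle : ∀ a n, payoff q g x₁ a n ≤ nValue q g x₁ n := fun a n => le_ciSup (hbdd n) a
  have hn1 : ∀ n, nValue q g x₁ n ≤ 1 := fun n => ciSup_le fun a => hp1 a n
  have hn0 : ∀ n, 0 ≤ nValue q g x₁ n := fun n => (hp0 (Classical.arbitrary _) n).trans (hle _ n)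
  have hB1 : IsBoundedUnder (· ≤ ·) atTop (fun n => nValue q g x₁ n) :=
    isBoundedUnder_of ⟨1, hn1⟩
  have hB2 : IsBoundedUnder (· ≥ ·) atTop (fun n => nValue q g x₁ n) :=
    isBoundedUnder_of ⟨0, hn0⟩
  set v := limsup (fun n => nValue q g x₁ n) atTop with hvdef
  have hv1 : v ≤ 1 := limsup_le_of_le hB2.isCoboundedUnder_le (Eventually.of_forall hn1)
  have hfreq : ∀ ε > 0, ∃ᶠ n in atTop, ∃ a : ℕ → I, n * (v - ε) ≤ totPay q g x₁ a n := by
    intro ε hε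
    have h1 : ∃ᶠ n in atTop, v - ε < nValue q g x₁ n :=
      frequently_lt_of_lt_limsup hB2.isCoboundedUnder_le (by linarith)
    refine (h1.and_eventually (eventually_gt_atTop 0)).mono fun n ⟨h2, hn⟩ => ?_
    obtain ⟨a, ha⟩ := exists_lt_of_lt_ciSup h2
    refine ⟨a, ?_⟩
    rw [hpay, lt_div_iff₀ (by exact_mod_cast hn)] at ha
    linarith
  have hopt : ∀ k : ℕ, ∃ J : Finset I, ∃ (z : I → ℕ) (b : ℕ → I) (K : ℝ), Prof J z b ∧
      ∀ n : ℕ, n * (v - 1 / (2 * ((k:ℝ) + 1))) - K ≤ totPay q g x₁ b n := by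
    intro k
    obtain ⟨b, K, h⟩ := eps_opt hX hg hLip hgu x₁ v hfreq
      (ε := 1 / (2 * ((k:ℝ) + 1))) (by positivity)
    obtain ⟨J, z, hJ⟩ := exists_prof b
    exact ⟨J, z, b, K, hJ, h⟩
  have hJ : ∃ J : Finset I, ∀ k : ℕ, ∃ (z : I → ℕ) (b : ℕ → I) (K : ℝ), Prof J z b ∧
      ∀ n : ℕ, n * (v - 1 / (2 * ((k:ℝ) + 1))) - K ≤ totPay q g x₁ b n := by
    by_contra! hcon
    choose kk hkk using hcon
    obtain ⟨J, z, b, K, hP, h⟩ := hopt (∑ J, kk J)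
    obtain ⟨n, hn⟩ := hkk J z b K hP
    have h2 := h n
    have h3 : kk J ≤ ∑ J, kk J :=
      Finset.single_le_sum (fun _ _ => Nat.zero_le _) (Finset.mem_univ J)
    have h3' : (kk J : ℝ) ≤ ((∑ J, kk J : ℕ) : ℝ) := by exact_mod_cast h3
    have h4 : 1 / (2 * (((∑ J, kk J : ℕ) : ℝ) + 1)) ≤ 1 / (2 * ((kk J : ℝ) + 1)) := by gcongr
    have h5 : (n:ℝ) * (v - 1 / (2 * ((kk J : ℝ) + 1))) ≤
        n * (v - 1 / (2 * (((∑ J, kk J : ℕ) : ℝ) + 1))) := by gcongr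
    linarith
  obtain ⟨J, hJ⟩ := hJ
  choose z b K0 hP hK0 using hJ
  obtain ⟨φ, hφ⟩ := (wellQuasiOrdered_le (α := I → ℕ)).exists_monotone_subseq z
  have hφk : ∀ k, k ≤ φ k := fun k => φ.strictMono.id_le k
  have hst := fun k : ℕ => step_lemma hX hg hLip hgu x₁ (hP (φ k))
    (w := v - 1 / (2 * ((φ k:ℝ) + 1))) (K0 := K0 (φ k))
    (by have : 0 ≤ 1 / (2 * ((φ k:ℝ) + 1)) := by positivity
        linarith) (hK0 (φ k)) (η := 1 / (2 * ((k:ℝ) + 1))) (by positivity)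
  choose K hK using hst
  obtain ⟨a, C, ha⟩ := glue (q := q) hg x₁ v (fun k y => ∃ M : Multiset I, y = M.foldl q x₁ ∧
      ∀ i ∉ J, M.count i ≤ z (φ k) i) ⟨0, by simp⟩ (fun k => 1 / ((k:ℝ) + 1))
      (fun k => 3 / ((k:ℝ) + 1)) K (by
        rintro k _ ⟨M, rfl, hM⟩
        obtain ⟨c, hc⟩ := hK k M hM
        refine ⟨c, fun n => ⟨?_, fun hn => ⟨M + used c n, play_foldl _ _ _ _, fun i hi =>
          ((hc n).2 hn i hi).trans (hφ k (k + 1) (by omega) i)⟩⟩⟩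
        refine le_trans ?_ (hc n).1
        have h3' : (k : ℝ) ≤ φ k := by exact_mod_cast hφk k
        have h4 : 1 / (2 * ((φ k : ℝ) + 1)) ≤ 1 / (2 * ((k : ℝ) + 1)) := by gcongr
        have h5 : 1 / (2 * ((k : ℝ) + 1)) + 1 / (2 * ((k : ℝ) + 1)) = 1 / ((k : ℝ) + 1) := by
          field_simp; norm_num
        have h6 : (n:ℝ) * (v - 1 / ((k : ℝ) + 1)) ≤
          n * (v - 1 / (2 * ((φ k : ℝ) + 1)) - 1 / (2 * ((k : ℝ) + 1))) :=
          mul_le_mul_of_nonneg_left (by linarith) (Nat.cast_nonneg n)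
        linarith)
      (by intro k; gcongr; norm_num)
      (by
        intro k
        rw [div_lt_div_iff₀ (by positivity) (by positivity)]
        push_cast
        have : (0:ℝ) ≤ k := by positivity
        linarith)
      (by intro k l h; dsimp only; gcongr)
  refine ⟨v, a, le_rfl, ?_⟩
  rw [tendsto_order]
  constructor
  · intro u hu
    obtain ⟨k, hk⟩ := exists_nat_gt (6 / (v - u))
    have huv : 0 < v - u := by linarith
    rw [div_lt_iff₀ huv] at hk
    have hk' : 3 / ((k:ℝ) + 1) < (v - u) / 2 := by
      rw [div_lt_iff₀ (by positivity)]
      linarith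
    obtain ⟨T, hT⟩ := ha k
    obtain ⟨T', hT'⟩ := exists_nat_gt (C / ((v - u) / 2))
    rw [div_lt_iff₀ (by positivity)] at hT'
    filter_upwards [eventually_ge_atTop T, eventually_ge_atTop T', eventually_gt_atTop 0]
      with n h1 h2 h3
    have h3' : (0:ℝ) < n := by exact_mod_cast h3
    rw [hpay, lt_div_iff₀ h3']
    have h4 := hT n h1
    have h5 : (T':ℝ) * ((v - u) / 2) ≤ n * ((v - u) / 2) := by gcongr
    have h6 : (n:ℝ) * (3 / ((k:ℝ) + 1)) ≤ n * ((v - u) / 2) := by gcongr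
    linarith
  · intro u hu
    filter_upwards [eventually_lt_of_limsup_lt hu hB1] with n hn
    exact (hle a n).trans_lt hn
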